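/- For every ℓ ∈ {1, …, n}, the polynomial identity (Σ_{m=0}^{n} x_ℓ^m)·V = Σ_{i=1}^{n} X_{i,iℓ} holds. Equivalently, for any points W_0, …, W_n ∈ ℝⁿ, the ℓ-th coordinate of the centroid (W_0 + ⋯ + W_n)/(n+1) times V(W_0, …, W_n) equals (1/(n+1))·Σ_{i=1}^{n} X_{i,iℓ}(W_0, …, W_n). -/

import Mathlib

/-- The `(n+1) × (n+1)` matrix whose `j`-th column is `(x_1^j, …, x_n^j, 1)`,
with entries in the polynomial ring in the variables `x_i^j`
(a variable is a pair `(i, j) : Fin n × Fin (n+1)`, `i` the coordinate index, `j` the vertex index). -/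
noncomputable def Vmat (n : ℕ) : Matrix (Fin (n+1)) (Fin (n+1)) (MvPolynomial (Fin n × Fin (n+1)) ℝ) :=
  Matrix.of fun r c => if h : (r : ℕ) < n then MvPolynomial.X (⟨r, h⟩, c) else 1

/-- The basic determinant `V`. -/
noncomputable def Vpoly (n : ℕ) : MvPolynomial (Fin n × Fin (n+1)) ℝ := (Vmat n).det

/-- The matrix of `V` with its `i`-th row replaced by `(x_j^0 x_k^0, …, x_j^n x_k^n)`. -/
noncomputable def Xmat (n : ℕ) (i j k : Fin n) :
    Matrix (Fin (n+1)) (Fin (n+1)) (MvPolynomial (Fin n × Fin (n+1)) ℝ) :=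
  Matrix.of fun r c =>
    if (r : ℕ) = (i : ℕ) then MvPolynomial.X (j, c) * MvPolynomial.X (k, c)
    else if h : (r : ℕ) < n then MvPolynomial.X (⟨r, h⟩, c) else 1

/-- The basic determinant `X_{i,jk}`. -/
noncomputable def Xpoly (n : ℕ) (i j k : Fin n) : MvPolynomial (Fin n × Fin (n+1)) ℝ :=
  (Xmat n i j k).det

/-!
For square matrices `A` and `M`, replacing one row of `A` at a time by the corresponding row of
`A * M` and adding up the determinants gives `trace (A * M * adjugate A) = trace M * det A`.
Take for `A` the matrix of `V` and for `M` the diagonal matrix of the `ℓ`-th coordinates of the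
vertices: the trace is `∑ m, x_ℓ^m`, the `i`-th coordinate row contributes `X_{i,iℓ}`, and the row
of ones becomes a second copy of the `ℓ`-th coordinate row, so it contributes nothing.
-/

section Determinant

variable {m R : Type*} [Fintype m] [DecidableEq m] [CommRing R]

open Matrix

theorem det_updateRow_eq_vecMul_adjugate (A : Matrix m m R) (i : m) (b : m → R) :
    (A.updateRow i b).det = (b ᵥ* A.adjugate) i := by
  rw [← cramer_transpose_apply, cramer_eq_adjugate_mulVec, ← adjugate_transpose, mulVec_transpose]

theorem sum_det_updateRow (A B : Matrix m m R) :
    ∑ i, (A.updateRow i (B i)).det = (B * A.adjugate).trace :=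
  Finset.sum_congr rfl fun i _ => by
    rw [det_updateRow_eq_vecMul_adjugate, diag_apply, mul_apply_eq_vecMul]

theorem sum_det_updateRow_mul (A M : Matrix m m R) :
    ∑ i, (A.updateRow i ((A * M) i)).det = M.trace * A.det := by
  rw [sum_det_updateRow, trace_mul_comm, ← Matrix.mul_assoc, adjugate_mul, smul_mul,
    Matrix.one_mul, trace_smul, smul_eq_mul, mul_comm]

end Determinant

section BasicDeterminants

open MvPolynomial

variable {n : ℕ}

theorem Vmat_castSucc (i : Fin n) : Vmat n i.castSucc = fun c => X (i, c) := by
  ext1 c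
  simp [Vmat]

theorem Vmat_last : Vmat n (Fin.last n) = 1 := by
  ext1 c
  simp [Vmat]

theorem Xmat_eq_updateRow (i j k : Fin n) :
    Xmat n i j k = (Vmat n).updateRow i.castSucc fun c => X (j, c) * X (k, c) := by
  ext1 r c
  simp [Xmat, Vmat, Matrix.updateRow_apply, Fin.ext_iff]

/-- The diagonal matrix of the `ℓ`-th coordinates `x_ℓ^0, …, x_ℓ^n` of the vertices. It multiplies
`Vmat n` on the right, since the vertices index the columns there. -/
noncomputable def coordDiagonal (ℓ : Fin n) :
    Matrix (Fin (n + 1)) (Fin (n + 1)) (MvPolynomial (Fin n × Fin (n + 1)) ℝ) :=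
  Matrix.diagonal fun c => X (ℓ, c)

theorem trace_coordDiagonal (ℓ : Fin n) :
    (coordDiagonal ℓ).trace = ∑ m : Fin (n + 1), X (ℓ, m) :=
  Matrix.trace_diagonal _

theorem Vmat_mul_coordDiagonal_castSucc (i ℓ : Fin n) :
    (Vmat n * coordDiagonal ℓ) i.castSucc = fun c => X (i, c) * X (ℓ, c) := by
  ext1 c
  rw [coordDiagonal, Matrix.mul_diagonal, Vmat_castSucc]

theorem Vmat_mul_coordDiagonal_last (ℓ : Fin n) :
    (Vmat n * coordDiagonal ℓ) (Fin.last n) = Vmat n ℓ.castSucc := by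
  ext1 c
  rw [coordDiagonal, Matrix.mul_diagonal, Vmat_last, Vmat_castSucc, Pi.one_apply, one_mul]

theorem Xpoly_eq_det_updateRow (i ℓ : Fin n) :
    Xpoly n i i ℓ =
      ((Vmat n).updateRow i.castSucc ((Vmat n * coordDiagonal ℓ) i.castSucc)).det := by
  rw [Xpoly, Xmat_eq_updateRow, Vmat_mul_coordDiagonal_castSucc]

theorem det_updateRow_last_Vmat_mul_coordDiagonal (ℓ : Fin n) :
    ((Vmat n).updateRow (Fin.last n) ((Vmat n * coordDiagonal ℓ) (Fin.last n))).det = 0 := by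
  rw [Vmat_mul_coordDiagonal_last, Matrix.det_updateRow_eq_zero (Fin.castSucc_lt_last ℓ).ne]

theorem sum_X_mul_Vpoly (ℓ : Fin n) :
    (∑ m : Fin (n + 1), X (ℓ, m)) * Vpoly n = ∑ i : Fin n, Xpoly n i i ℓ :=
  calc (∑ m : Fin (n + 1), X (ℓ, m)) * Vpoly n
      = (coordDiagonal ℓ).trace * (Vmat n).det := by rw [trace_coordDiagonal, Vpoly]
    _ = ∑ r, ((Vmat n).updateRow r ((Vmat n * coordDiagonal ℓ) r)).det :=
      (sum_det_updateRow_mul _ _).symm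
    _ = ∑ i : Fin n, Xpoly n i i ℓ := by
      simp only [Fin.sum_univ_castSucc, det_updateRow_last_Vmat_mul_coordDiagonal, add_zero,
        Xpoly_eq_det_updateRow]

end BasicDeterminants

/-- The identity `(Σ_m x_ℓ^m) · V = Σ_i X_{i,iℓ}`; equivalently, the `ℓ`-th coordinate of the
centroid of `W_0, …, W_n` times `V(W_0, …, W_n)` equals `(1/(n+1)) Σ_i X_{i,iℓ}(W_0, …, W_n)`. -/
theorem centroid_poly_identity (n : ℕ) (hn : 1 ≤ n) (ℓ : Fin n) :
    ((∑ m : Fin (n+1), MvPolynomial.X (ℓ, m)) * Vpoly n = ∑ i : Fin n, Xpoly n i i ℓ)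
    ∧ ∀ W : Fin (n+1) → EuclideanSpace ℝ (Fin n),
        ((((n : ℝ) + 1)⁻¹ • ∑ m : Fin (n+1), W m) ℓ) *
            MvPolynomial.eval (fun v => W v.2 v.1) (Vpoly n) =
          (1 / ((n : ℝ) + 1)) *
            ∑ i : Fin n, MvPolynomial.eval (fun v => W v.2 v.1) (Xpoly n i i ℓ) := by
  refine ⟨sum_X_mul_Vpoly ℓ, fun W => ?_⟩
  have eval_identity := congrArg (MvPolynomial.eval fun v => W v.2 v.1) (sum_X_mul_Vpoly ℓ)
  simp only [map_mul, map_sum, MvPolynomial.eval_X] at eval_identity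
  have centroid_coord : (((n : ℝ) + 1)⁻¹ • ∑ m, W m) ℓ = 1 / ((n : ℝ) + 1) * ∑ m, W m ℓ := by
    simp
  rw [centroid_coord, mul_assoc, eval_identity]
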